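/- Let g be a Lie algebra over a commutative ring R that is free as an R-module. The Chevalley–Eilenberg boundary ∂_k : Λ^k g → Λ^{k−1} g, defined by ∂_k(x_1∧…∧x_k) = Σ_{r<s} (−1)^{r+s} [x_r,x_s] ∧ x_1 ∧ … ∧ x̂_r ∧ … ∧ x̂_s ∧ … ∧ x_k, satisfies ∂_{k−1} ∘ ∂_k = 0. -/

import Mathlib

open ExteriorAlgebra

/-- The wedge `x₁ ∧ … ∧ xₙ`, as an element of the `n`-th exterior power `⋀[R]^n M`. -/
noncomputable def wedge {R M : Type*} [CommRing R] [AddCommGroup M] [Module R M] (n : ℕ)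
    (v : Fin n → M) : ⋀[R]^n M :=
  ⟨ιMulti R n v, ιMulti_range R n (Set.mem_range_self v)⟩

namespace CEHelper

variable {R : Type*} [CommRing R] {L : Type*} [LieRing L] [LieAlgebra R L]

theorem ext_induction {P : ExteriorAlgebra R L → Prop}
    (h1 : ∀ r : R, P (algebraMap R _ r)) (h2 : ∀ x y, P x → P y → P (x + y))
    (h3 : ∀ (m : L) x, P x → P (ι R m * x)) (x : ExteriorAlgebra R L) : P x :=
  CliffordAlgebra.left_induction (Q := (0 : QuadraticForm R L)) h1 h2 (fun x m h => h3 m x h) x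

theorem swap (x y : L) (w : ExteriorAlgebra R L) :
    ι R x * (ι R y * w) = - (ι R y * (ι R x * w)) := by
  rw [← mul_assoc, ← mul_assoc, eq_neg_iff_add_eq_zero, ← add_mul, ι_add_mul_swap, zero_mul]

theorem sq (x : L) (w : ExteriorAlgebra R L) : ι R x * (ι R x * w) = 0 := by
  rw [← mul_assoc, ι_sq_zero, zero_mul]

/-- Left multiplication by a generator. -/
noncomputable def lm : L →ₗ[R] ExteriorAlgebra R L →ₗ[R] ExteriorAlgebra R L :=
  (LinearMap.mul R (ExteriorAlgebra R L)).comp (ι R)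

/-- Recursion step for the derivation extending `ad x`. -/
noncomputable def thetaStep (x : L) :
    L →ₗ[R] ExteriorAlgebra R L × ExteriorAlgebra R L →ₗ[R] ExteriorAlgebra R L :=
  LinearMap.mk₂ R (fun y p => ι R ⁅x, y⁆ * p.1 + ι R y * p.2)
    (by intros; simp [add_mul]; abel) (by intros; simp)
    (by intros; simp [mul_add]; abel) (by intros; simp)

theorem exists_theta (x : L) : ∃ T : ExteriorAlgebra R L →ₗ[R] ExteriorAlgebra R L,
    (∀ r : R, T (algebraMap R _ r) = 0) ∧
    ∀ y w, T (ι R y * w) = ι R ⁅x, y⁆ * w + ι R y * T w := by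
  have hf : ∀ (m : L) (w fw : ExteriorAlgebra R L),
      thetaStep x m (CliffordAlgebra.ι (0 : QuadraticForm R L) m * w, thetaStep x m (w, fw))
        = (0 : QuadraticForm R L) m • fw := by
    intro m w fw
    change ι R ⁅x, m⁆ * (ι R m * w) + ι R m * (ι R ⁅x, m⁆ * w + ι R m * fw) = (0 : R) • fw
    rw [mul_add, sq, swap m]
    simp
  refine ⟨CliffordAlgebra.foldr' (0 : QuadraticForm R L) (thetaStep x) hf 0, ?_, ?_⟩
  · intro r
    exact (CliffordAlgebra.foldr'_algebraMap _ _ hf 0 r).trans (smul_zero _)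
  · intro y w
    exact CliffordAlgebra.foldr'_ι_mul _ _ hf 0 y w

/-- The derivation extending `ad x`. -/
noncomputable def theta0 (x : L) : ExteriorAlgebra R L →ₗ[R] ExteriorAlgebra R L :=
  (exists_theta x).choose

theorem theta0_alg (x : L) (r : R) : theta0 x (algebraMap R (ExteriorAlgebra R L) r) = 0 :=
  (exists_theta x).choose_spec.1 r

theorem theta0_mul (x y : L) (w : ExteriorAlgebra R L) :
    theta0 x (ι R y * w) = ι R ⁅x, y⁆ * w + ι R y * theta0 x w :=
  (exists_theta x).choose_spec.2 y w

theorem theta0_add (x y : L) (w : ExteriorAlgebra R L) :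
    theta0 (x + y) w = theta0 x w + theta0 y w := by
  induction w using ext_induction with
  | h1 r => simp [theta0_alg]
  | h2 a b ha hb => rw [map_add, map_add, map_add, ha, hb]; abel
  | h3 m w h => simp only [theta0_mul, h, add_lie, map_add, add_mul, mul_add]; abel

theorem theta0_smul (c : R) (x : L) (w : ExteriorAlgebra R L) :
    theta0 (c • x) w = c • theta0 x w := by
  induction w using ext_induction with
  | h1 r => simp [theta0_alg]
  | h2 a b ha hb => rw [map_add, map_add, ha, hb, smul_add]
  | h3 m w h => simp only [theta0_mul, h, smul_lie, map_smul, smul_add, smul_mul_assoc,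
      mul_smul_comm]

theorem theta0_lie (x y : L) (w : ExteriorAlgebra R L) :
    theta0 ⁅x, y⁆ w = theta0 x (theta0 y w) - theta0 y (theta0 x w) := by
  induction w using ext_induction with
  | h1 r => simp [theta0_alg]
  | h2 a b ha hb => simp only [map_add, ha, hb]; abel
  | h3 m w h =>
    simp only [theta0_mul, h, lie_lie, map_add, map_sub, sub_mul, mul_sub]; abel

/-- Recursion step for the boundary. -/
noncomputable def dStep :
    L →ₗ[R] ExteriorAlgebra R L × ExteriorAlgebra R L →ₗ[R] ExteriorAlgebra R L :=
  LinearMap.mk₂ R (fun y p => - theta0 y p.1 - ι R y * p.2)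
    (by intros; simp [add_mul, theta0_add]; abel) (by intros; simp [theta0_smul, smul_sub])
    (by intros; simp [mul_add]; abel) (by intros; simp [smul_sub])

theorem exists_d : ∃ T : ExteriorAlgebra R L →ₗ[R] ExteriorAlgebra R L,
    (∀ r : R, T (algebraMap R _ r) = 0) ∧
    ∀ y w, T (ι R y * w) = - theta0 y w - ι R y * T w := by
  have hf : ∀ (m : L) (w fw : ExteriorAlgebra R L),
      dStep m (CliffordAlgebra.ι (0 : QuadraticForm R L) m * w, dStep m (w, fw))
        = (0 : QuadraticForm R L) m • fw := by
    intro m w fw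
    change - theta0 m (ι R m * w) - ι R m * (- theta0 m w - ι R m * fw) = (0 : R) • fw
    rw [mul_sub, sq, theta0_mul, lie_self]
    simp
  refine ⟨CliffordAlgebra.foldr' (0 : QuadraticForm R L) dStep hf 0, ?_, ?_⟩
  · intro r
    exact (CliffordAlgebra.foldr'_algebraMap _ _ hf 0 r).trans (smul_zero _)
  · intro y w
    exact CliffordAlgebra.foldr'_ι_mul _ _ hf 0 y w

/-- The boundary on the whole exterior algebra. -/
noncomputable def D : ExteriorAlgebra R L →ₗ[R] ExteriorAlgebra R L :=
  exists_d.choose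

theorem D_alg (r : R) : D (algebraMap R (ExteriorAlgebra R L) r) = 0 :=
  exists_d.choose_spec.1 r

theorem D_mul (y : L) (w : ExteriorAlgebra R L) :
    D (ι R y * w) = - theta0 y w - ι R y * D w :=
  exists_d.choose_spec.2 y w

theorem D_theta (x : L) (w : ExteriorAlgebra R L) : D (theta0 x w) = theta0 x (D w) := by
  induction w using ext_induction with
  | h1 r => simp [theta0_alg, D_alg]
  | h2 a b ha hb => simp only [map_add, ha, hb]
  | h3 m w h =>
    simp only [theta0_mul, D_mul, h, map_add, map_sub, map_neg, theta0_lie]; abel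

theorem D_D (w : ExteriorAlgebra R L) : D (D w) = 0 := by
  induction w using ext_induction with
  | h1 r => simp [D_alg]
  | h2 a b ha hb => simp only [map_add, ha, hb, add_zero]
  | h3 m w h =>
    simp only [D_mul, map_sub, map_neg, h, D_theta, mul_zero]; abel

theorem ιMulti_cons {n : ℕ} (a : L) (v : Fin n → L) :
    ιMulti R (n + 1) (Fin.cons a v : Fin (n + 1) → L) = ι R a * ιMulti R n v := by
  rw [ιMulti_succ_apply]
  rfl

theorem theta_formula (x : L) : ∀ (n : ℕ) (w : Fin (n + 1) → L),
    theta0 x (ιMulti R (n + 1) w) =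
      ∑ s : Fin (n + 1), ((-1 : ℤ) ^ (s : ℕ)) •
        (ι R ⁅x, w s⁆ * ιMulti R n (w ∘ s.succAbove)) := by
  intro n
  induction n with
  | zero =>
    intro w
    have : theta0 x (1 : ExteriorAlgebra R L) = 0 := by simpa using theta0_alg x (1 : R)
    rw [ιMulti_succ_apply, theta0_mul]
    simp [this]
  | succ n ih =>
    intro w
    obtain ⟨a, w, rfl⟩ : ∃ a w', w = Fin.cons a w' := ⟨w 0, Fin.tail w, (Fin.cons_self_tail w).symm⟩
    rw [ιMulti_cons, theta0_mul, ih, Fin.sum_univ_succ (n := n + 1)]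
    congr 1
    · simp [Function.comp_def]
    · rw [Finset.mul_sum]
      refine Finset.sum_congr rfl fun s _ => ?_
      have : (Fin.cons a w : Fin (n + 2) → L) ∘ s.succ.succAbove
          = (Fin.cons a (w ∘ s.succAbove) : Fin (n + 1) → L) := by
        funext i
        refine Fin.cases ?_ (fun i => ?_) i <;> simp
      rw [this, ιMulti_cons, Fin.cons_succ, swap _ a, mul_smul_comm, Fin.val_succ, pow_succ]
      simp

theorem lt_aux {k : ℕ} {r s : Fin (k + 2)} (h : r < s) : (r : ℕ) < k + 1 := by
  have h1 : (r : ℕ) < (s : ℕ) := h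
  have h2 := s.isLt
  omega

/-- The term of the boundary. -/
noncomputable def term (k : ℕ) (x : Fin (k + 2) → L) (r s : Fin (k + 2)) :
    ExteriorAlgebra R L :=
  if h : r < s then
            ((-1 : ℤ) ^ ((r : ℕ) + (s : ℕ))) •
              ιMulti R (k + 1)
                (Fin.cons ⁅x r, x s⁆
                  (x ∘ fun i : Fin k =>
                    s.succAbove
                      ((⟨(r : ℕ), lt_aux h⟩ : Fin (k + 1)).succAbove i)))
          else 0

theorem term_zero (k : ℕ) (a : L) (w : Fin (k + 1) → L) (s : Fin (k + 1)) :
    term (R := R) k (Fin.cons a w : Fin (k + 2) → L) 0 s.succ =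
      - (((-1 : ℤ) ^ (s : ℕ)) • (ι R ⁅a, w s⁆ * ιMulti R k (w ∘ s.succAbove))) := by
  rw [term, dif_pos (Fin.succ_pos s), ιMulti_cons]
  have : ((Fin.cons a w : Fin (k + 2) → L) ∘ fun i : Fin k =>
      s.succ.succAbove ((⟨((0 : Fin (k + 2)) : ℕ), by simp⟩ : Fin (k + 1)).succAbove i))
      = w ∘ s.succAbove := by
    funext i
    have h0 : (⟨((0 : Fin (k + 2)) : ℕ), by simp⟩ : Fin (k + 1)) = 0 := rfl
    simp
  rw [this]
  simp [pow_succ]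

theorem term_succ (k : ℕ) (a : L) (w : Fin (k + 2) → L) (r s : Fin (k + 2)) :
    term (R := R) (k + 1) (Fin.cons a w : Fin (k + 3) → L) r.succ s.succ =
      - (ι R a * term k w r s) := by
  by_cases h : r < s
  · rw [term, dif_pos (Fin.succ_lt_succ_iff.2 h), term, dif_pos h, ιMulti_cons, ιMulti_cons]
    have hr : (r : ℕ) < k + 1 := by
      have h1 : (r : ℕ) < (s : ℕ) := h
      have h2 := s.isLt
      omega
    have : ((Fin.cons a w : Fin (k + 3) → L) ∘ fun i : Fin (k + 1) =>
        s.succ.succAbove ((⟨(r.succ : ℕ), by simpa using hr⟩ : Fin (k + 2)).succAbove i))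
        = (Fin.cons a (w ∘ fun i : Fin k =>
          s.succAbove ((⟨(r : ℕ), hr⟩ : Fin (k + 1)).succAbove i)) : Fin (k + 1) → L) := by
      funext i
      have h0 : (⟨(r.succ : ℕ), by simpa using hr⟩ : Fin (k + 2))
        = Fin.succ (⟨(r : ℕ), hr⟩ : Fin (k + 1)) := rfl
      rw [Function.comp_apply, h0]
      refine Fin.cases ?_ (fun i => ?_) i
      · rw [Fin.succ_succAbove_zero, Fin.succ_succAbove_zero, Fin.cons_zero, Fin.cons_zero]
      · rw [Fin.succ_succAbove_succ, Fin.succ_succAbove_succ, Fin.cons_succ, Fin.cons_succ]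
        rfl
    rw [this, ιMulti_cons, swap _ a, mul_smul_comm, Fin.cons_succ, Fin.cons_succ, smul_neg]
    congr 2
    simp only [Fin.val_succ]
    ring
  · rw [term, dif_neg (by simpa using h), term, dif_neg h]
    simp

theorem term_right_zero (k : ℕ) (x : Fin (k + 2) → L) (r : Fin (k + 2)) :
    term (R := R) k x r 0 = 0 := by
  rw [term, dif_neg (by simp)]

theorem D_one (w : Fin 1 → L) : D (ιMulti R 1 w) = 0 := by
  have h : theta0 (w 0) (1 : ExteriorAlgebra R L) = 0 := by simpa using theta0_alg (w 0) (1 : R)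
  have h' : D (1 : ExteriorAlgebra R L) = 0 := by simpa using D_alg (L := L) (1 : R)
  rw [ιMulti_succ_apply, D_mul]
  simp [h, h']

theorem D_formula : ∀ (k : ℕ) (x : Fin (k + 2) → L),
    D (ιMulti R (k + 2) x) = ∑ r, ∑ s, term k x r s := by
  intro k
  induction k with
  | zero =>
    intro x
    obtain ⟨a, w, rfl⟩ : ∃ a w', x = Fin.cons a w' := ⟨x 0, Fin.tail x, (Fin.cons_self_tail x).symm⟩
    have h1 : term (R := R) 0 (Fin.cons a w : Fin 2 → L) 1 1 = 0 := by
      rw [term, dif_neg (lt_irrefl _)]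
    have h0 := term_zero (R := R) 0 a w 0
    have e : (Fin.succ 0 : Fin 2) = 1 := rfl
    rw [e] at h0
    rw [ιMulti_cons, D_mul, theta_formula, D_one, Fin.sum_univ_two, Fin.sum_univ_two,
      Fin.sum_univ_two, term_right_zero, term_right_zero, h1, h0]
    simp
  | succ k ih =>
    intro x
    obtain ⟨a, w, rfl⟩ : ∃ a w', x = Fin.cons a w' := ⟨x 0, Fin.tail x, (Fin.cons_self_tail x).symm⟩
    rw [ιMulti_cons, D_mul, theta_formula, ih, Fin.sum_univ_succ (n := k + 2)]
    simp only [Fin.sum_univ_succ (n := k + 2), term_right_zero, term_zero, term_succ, zero_add,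
      Finset.sum_neg_distrib, Finset.mul_sum, sub_eq_add_neg]

theorem wedge_induction {n : ℕ} {N : Type*} [AddCommGroup N] [Module R N]
    (f g : (⋀[R]^n L) →ₗ[R] N) (h : ∀ v, f (wedge n v) = g (wedge n v)) : f = g := by
  refine LinearMap.ext_on_range (exteriorPower.ιMulti_span R n L) (fun v => h v)

end CEHelper

/-- Let `g` be a Lie algebra over a commutative ring `R`, free as an `R`-module.  The
Chevalley–Eilenberg boundary `∂ₖ : Λᵏ g → Λᵏ⁻¹ g`, characterized on wedges of generators by
`∂ₖ(x₁∧…∧xₖ) = Σ_{r<s} (−1)^{r+s} [x_r,x_s] ∧ x₁ ∧ … ∧ x̂_r ∧ … ∧ x̂_s ∧ … ∧ xₖ`,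
satisfies `∂ₖ₋₁ ∘ ∂ₖ = 0`. -/
theorem stmt_7 (R : Type*) [CommRing R] (L : Type*) [LieRing L] [LieAlgebra R L]
    [Module.Free R L]
    (d : ∀ k : ℕ, (⋀[R]^(k + 1) L) →ₗ[R] ⋀[R]^k L)
    (hd : ∀ (k : ℕ) (x : Fin (k + 2) → L),
      d (k + 1) (wedge (k + 2) x) =
        ∑ r : Fin (k + 2), ∑ s : Fin (k + 2),
          if h : r < s then
            ((-1 : ℤ) ^ ((r : ℕ) + (s : ℕ))) •
              wedge (k + 1)
                (Fin.cons ⁅x r, x s⁆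
                  (x ∘ fun i : Fin k =>
                    s.succAbove
                      ((⟨(r : ℕ), by
                        have h1 : (r : ℕ) < (s : ℕ) := h
                        have h2 := s.isLt
                        omega⟩ : Fin (k + 1)).succAbove i)))
          else 0)
    (hd0 : ∀ x : Fin 1 → L, d 0 (wedge 1 x) = 0) :
    ∀ k : ℕ, (d k).comp (d (k + 1)) = 0 := by
  have key : ∀ (k : ℕ) (z : ⋀[R]^(k + 1) L),
      ((d k z : ⋀[R]^k L) : ExteriorAlgebra R L) = CEHelper.D (z : ExteriorAlgebra R L) := by
    intro k z
    have : (Submodule.subtype _).comp (d k) = CEHelper.D.comp (Submodule.subtype _) := by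
      apply CEHelper.wedge_induction
      intro v
      cases k with
      | zero =>
        simp only [LinearMap.comp_apply, hd0]
        exact (CEHelper.D_one v).symm
      | succ k =>
        simp only [LinearMap.comp_apply, hd]
        refine Eq.trans ?_ (CEHelper.D_formula k v).symm
        rw [map_sum]
        refine Finset.sum_congr rfl fun r _ => ?_
        rw [map_sum]
        refine Finset.sum_congr rfl fun s _ => ?_
        rw [CEHelper.term]
        split_ifs with h
        · rw [map_zsmul]
          rfl
        · exact map_zero _
    exact LinearMap.congr_fun this z
  intro k
  refine LinearMap.ext fun z => ?_
  apply Subtype.ext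
  rw [LinearMap.comp_apply, key, key, CEHelper.D_D]
  rfl
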